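/- arXiv:1208.0129 — 4 statements merged into one kernel-verified Lean document; each statement's English description precedes it below -/
import Mathlib

section
/- Let λ > 0, let (Rᵢ*)_{i∈ℕ} be a sequence of nonnegative reals with R₁* ≤ B for a constant B < ∞, and let (γ̄ᵢ)_{i∈ℕ} be a strictly increasing sequence of positive reals with γ̄ᵢ → ∞. Let s ∈ ℕ satisfy s ≥ ⌈log(1 + B/γ̄₁)/log(1+λ)⌉ + 2, and for k ∈ {0,…,s−1} let j_{k+1} be the largest index j with γ̄ⱼ ≤ (1+λ)ᵏ·γ̄₁; set J := max{j₁,…,j_s}. Then any index i* minimizing i ↦ Rᵢ* + (1+λ)·γ̄ᵢ over i ∈ ℕ satisfies i* ≤ J. -/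
/-!
Since the base index has the smallest penalty `γ 0` and risks are nonnegative, comparing the
minimizer with the base index gives `γ istar ≤ γ 0 + B`. The exponent
`n = ⌈log (1 + B / γ 0) / log (1 + λ)⌉₊` is chosen so that `γ 0 + B ≤ (1 + λ) ^ n * γ 0`, so the
single grid index at level `n` already dominates the minimizer.
-/

theorem le_pow_natCeil_logb {b x : ℝ} (hb : 1 < b) (hx : 0 < x) :
    x ≤ b ^ ⌈Real.logb b x⌉₊ := by
  rw [← Real.rpow_natCast]
  exact (Real.logb_le_iff_le_rpow hb hx).1 (Nat.le_ceil _)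

theorem add_le_pow_natCeil_logb_mul {b a t : ℝ} (hb : 1 < b) (ha : 0 < a) (hat : 0 < a + t) :
    a + t ≤ b ^ ⌈Real.logb b (1 + t / a)⌉₊ * a := by
  have one_add_div : 1 + t / a = (a + t) / a := by rw [add_div, div_self ha.ne']
  rw [← div_le_iff₀ ha, one_add_div]
  exact le_pow_natCeil_logb hb (div_pos hat ha)

theorem le_add_of_add_mul_le_add_mul {K : Type*} [Ring K] [PartialOrder K] [IsOrderedRing K]
    {c r r₀ g g₀ : K} (hc : 1 ≤ c) (hr : 0 ≤ r) (hg : g₀ ≤ g)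
    (h : r + c * g ≤ r₀ + c * g₀) : g ≤ g₀ + r₀ := by
  rw [← sub_le_iff_le_add']
  calc
    g - g₀ ≤ c * (g - g₀) := le_mul_of_one_le_left (sub_nonneg.2 hg) hc
    _ = c * g - c * g₀ := mul_sub c g g₀
    _ ≤ r₀ := sub_le_iff_le_add.2 ((le_add_of_nonneg_left hr).trans h)

theorem stmt4_general {ι : Type*} [SemilatticeSup ι] [OrderBot ι] {lam B : ℝ} (hlam : 0 < lam)
    {R γ : ι → ℝ} {i₀ i : ι} (hRB : R i₀ ≤ B) (hR : 0 ≤ R i) (hpos : 0 < γ i₀)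
    (hγ : γ i₀ ≤ γ i) (hi : R i + (1 + lam) * γ i ≤ R i₀ + (1 + lam) * γ i₀)
    {s : ℕ} (hs : ⌈Real.log (1 + B / γ i₀) / Real.log (1 + lam)⌉₊ < s) {jj : ℕ → ι}
    (hjj : ∀ k < s, jj k ∈ upperBounds {j | γ j ≤ (1 + lam) ^ k * γ i₀}) :
    i ≤ (Finset.range s).sup jj := by
  rw [Real.log_div_log] at hs
  have penalty_le : γ i ≤ γ i₀ + B :=
    (le_add_of_add_mul_le_add_mul (by linarith) hR hγ hi).trans (by gcongr)
  have le_grid : γ i₀ + B ≤ (1 + lam) ^ ⌈Real.logb (1 + lam) (1 + B / γ i₀)⌉₊ * γ i₀ :=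
    add_le_pow_natCeil_logb_mul (by linarith) hpos (by linarith)
  exact (hjj _ hs (penalty_le.trans le_grid)).trans (Finset.le_sup (Finset.mem_range.2 hs))

/-- Lemma 2 (`lemma:finite`) of Agarwal–Bartlett–Duchi: once the grid size `s`
is large enough, any minimizer of the penalized risk `i ↦ Rᵢ* + (1+λ) γ̄ᵢ`
lies below the largest grid index `J = max{j₁,…,j_s}`, where `jⱼ` are the
coarse-grid indices. -/
theorem stmt4 (lam : ℝ) (hlam : 0 < lam) (B : ℝ)
    (Rstar : ℕ → ℝ) (hRnonneg : ∀ i, 0 ≤ Rstar i) (hRB : Rstar 0 ≤ B)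
    (γ : ℕ → ℝ) (hpos : ∀ i, 0 < γ i) (hsm : StrictMono γ)
    (hdiv : Filter.Tendsto γ Filter.atTop Filter.atTop)
    (s : ℕ)
    (hs : ⌈Real.log (1 + B / γ 0) / Real.log (1 + lam)⌉₊ + 2 ≤ s)
    (jj : ℕ → ℕ)
    (hjj : ∀ k < s, γ (jj k) ≤ (1 + lam) ^ k * γ 0 ∧
      ∀ j, γ j ≤ (1 + lam) ^ k * γ 0 → j ≤ jj k)
    (istar : ℕ)
    (hmin : ∀ i : ℕ, Rstar istar + (1 + lam) * γ istar ≤ Rstar i + (1 + lam) * γ i) :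
    istar ≤ (Finset.range s).sup jj := by
  exact stmt4_general hlam hRB (hRnonneg istar) (hpos 0) (hsm.monotone istar.zero_le) (hmin 0)
    (by omega) fun k hk => (hjj k hk).2
end

section
/- In the nested computationally budgeted model-selection setup specialized to linear classification with nested norm balls—where nᵢ(t) = n·t/d for all i (so n·T/d is the number of samples processable with budget T) and penᵢ(t) = 2rᵢX̄·√(d/(n·t))—assume n·T ≥ d/B and n·T ≥ d/(4r₁²X̄²). Then with probability at least 1 − 2c₁·exp(−m), the output f of the coarse-grid model-selection algorithm satisfies R(f) ≤ inf_{i=1,2,…} { Rᵢ* + √(d·log₂(16B·nT/d)/(nT)) · ( 8rᵢX̄ + √8·c₂·√(m + log log₂(16B·nT/d)) ) }. -/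
open MeasureTheory

/-!
Run every class of the grid at confidence level `ε i = √((m + log s) / N i) / 2`. A union bound over
the at most `s` grid classes leaves an event of probability at least `1 - 2 c₁ exp (-m)` on which
all the concentration inequalities hold, both for the outputs of the algorithm and for one
near-minimizer of the risk per class. On it the selection criterion dominates the risk of the
selected output, because `√(m + log s) ≤ √m + √(log s)`. Comparing criteria then gives
`R f ≤ Rᵢ* + p̄ᵢ` for the grid classes `i`. The matching bound `√m + √(log s) ≤ √2 √(m + log s)`
leaves a slack proportional to `√2 - 1`, which pays for replacing minimizers by near-minimizers.

Off the grid, the least `k` with `p̄ᵢ ≤ 2ᵏ p̄₁` also satisfies `2ᵏ p̄₁ ≤ 2 p̄ᵢ`, and the grid class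
it defines contains the class `i`, which costs a factor two. If there is no such `k` below `s`, then
the choice of `s` forces `p̄ᵢ ≥ B ≥ R₁*`, and the first grid class does the job.
-/

section RealInequalities

theorem sqrt_add_le_sqrt_add_sqrt {a b : ℝ} (ha : 0 ≤ a) (hb : 0 ≤ b) :
    √(a + b) ≤ √a + √b := by
  refine Real.sqrt_le_iff.2 ⟨by positivity, ?_⟩
  rw [add_sq, Real.sq_sqrt ha, Real.sq_sqrt hb]
  linarith [mul_nonneg (Real.sqrt_nonneg a) (Real.sqrt_nonneg b)]

theorem sqrt_add_sqrt_le_sqrt_two_mul {a b : ℝ} (ha : 0 ≤ a) (hb : 0 ≤ b) :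
    √a + √b ≤ √2 * √(a + b) := by
  rw [← Real.sqrt_mul zero_le_two]
  refine Real.le_sqrt_of_sq_le (add_sq_le.trans_eq ?_)
  rw [Real.sq_sqrt ha, Real.sq_sqrt hb]

theorem exists_le_two_pow_mul_le_two_mul {x y : ℝ} (hx : 0 ≤ x) (hxy : x ≤ y) {l : ℕ}
    (hy : y ≤ 2 ^ l * x) : ∃ k ≤ l, y ≤ 2 ^ k * x ∧ 2 ^ k * x ≤ 2 * y := by
  induction l with
  | zero => exact ⟨0, le_rfl, hy, by linarith⟩
  | succ l ih =>
    by_cases hl : y ≤ 2 ^ l * x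
    · obtain ⟨k, hkl, hk⟩ := ih hl
      exact ⟨k, by omega, hk⟩
    · refine ⟨l + 1, le_rfl, hy, ?_⟩
      rw [pow_succ']
      linarith

end RealInequalities

section CoarseGridSize

/-- The number `s` of classes in the coarse grid, as a function of `x = B · n₁(T)`: enough for the
powers of two up to `2 ^ (s - 1)` to exceed `x`. -/
noncomputable def coarseGridSize (x : ℝ) : ℕ := ⌈Real.logb 2 (1 + x)⌉₊ + 2

theorem two_mul_one_add_le_two_pow_coarseGridSize {x : ℝ} (hx : 0 ≤ x) :
    2 * (1 + x) ≤ 2 ^ (coarseGridSize x - 1) := by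
  have h : 1 + x ≤ 2 ^ ⌈Real.logb 2 (1 + x)⌉₊ := by
    rw [← Real.rpow_natCast, ← Real.logb_le_iff_le_rpow one_lt_two (by linarith)]
    exact Nat.le_ceil _
  rw [show coarseGridSize x - 1 = ⌈Real.logb 2 (1 + x)⌉₊ + 1 from rfl, pow_succ']
  linarith

theorem coarseGridSize_le_logb {x : ℝ} (hx : 1 ≤ x) :
    (coarseGridSize x : ℝ) ≤ Real.logb 2 (16 * x) := by
  have hceil : (⌈Real.logb 2 (1 + x)⌉₊ : ℝ) < Real.logb 2 (1 + x) + 1 :=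
    Nat.ceil_lt_add_one (Real.logb_nonneg one_lt_two (by linarith))
  have hdouble : Real.logb 2 (1 + x) ≤ Real.logb 2 (2 * x) :=
    Real.logb_le_logb_of_le one_lt_two (by linarith) (by linarith)
  have hsplit : Real.logb 2 (16 * x) = 3 + Real.logb 2 (2 * x) := by
    rw [show 16 * x = 2 ^ (3 : ℝ) * (2 * x) by norm_num; ring,
      Real.logb_mul (by positivity) (by positivity), Real.logb_rpow two_pos (by norm_num)]
  rw [coarseGridSize]
  push_cast
  linarith

theorem le_two_pow_coarseGridSize_mul {B M p : ℝ} (hB : 0 ≤ B) (hM : 0 ≤ M) (hp : 0 ≤ p)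
    (hpM : 1 ≤ p * M) : B ≤ 2 ^ (coarseGridSize (B * M) - 1) * p :=
  calc B ≤ B * (p * M) := le_mul_of_one_le_right hB hpM
    _ = B * M * p := by ring
    _ ≤ 2 * (1 + B * M) * p := mul_le_mul_of_nonneg_right (by linarith [mul_nonneg hB hM]) hp
    _ ≤ 2 ^ (coarseGridSize (B * M) - 1) * p := by
      gcongr
      exact two_mul_one_add_le_two_pow_coarseGridSize (mul_nonneg hB hM)

end CoarseGridSize

section ConfidenceWidth

/-- Twice the deviation `ε` at which the tail bound `exp (-4 N ε²)` for `N` samples equals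
`exp (-m) / s`. -/
noncomputable def confidenceWidth (m : ℝ) (s : ℕ) (N : ℝ) : ℝ := √((m + Real.log s) / N)

/-- The composite penalty `p̄` of a class with penalty `pen` and `N` samples in a grid of size
`s`. -/
noncomputable def compositePenalty (c₂ m : ℝ) (s : ℕ) (N pen : ℝ) : ℝ :=
  2 * pen + c₂ * √(2 * (m + Real.log s) / N)

/-- The quantity minimized over the grid: the empirical risk `L` of the output of a class with
penalty `pen` and `N` samples, plus the penalty and the two confidence terms. -/
noncomputable def selectionCriterion (c₂ m : ℝ) (s : ℕ) (N pen L : ℝ) : ℝ :=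
  L + pen + c₂ / 2 * √(m / N) + c₂ / 2 * √(Real.log s / N)

variable {c₂ m N : ℝ} {s : ℕ}

theorem confidenceWidth_pos (hm : 0 ≤ m) (hs : 1 < s) (hN : 0 < N) :
    0 < confidenceWidth m s N := by
  have : 0 < Real.log s := Real.log_pos (by exact_mod_cast hs)
  unfold confidenceWidth
  positivity

theorem exp_neg_four_mul_confidenceWidth (hm : 0 ≤ m) (hs : 0 < s) (hN : 0 < N) :
    Real.exp (-4 * N * (confidenceWidth m s N / 2) ^ 2) = Real.exp (-m) / s := by
  have hexponent : -4 * N * (confidenceWidth m s N / 2) ^ 2 = -m - Real.log s := by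
    rw [confidenceWidth, div_pow, Real.sq_sqrt (by positivity)]
    field_simp
    ring
  rw [hexponent, Real.exp_sub, Real.exp_log (by exact_mod_cast hs)]

theorem compositePenalty_eq (pen : ℝ) :
    compositePenalty c₂ m s N pen = 2 * pen + c₂ * (√2 * confidenceWidth m s N) := by
  rw [compositePenalty, confidenceWidth, mul_div_assoc, Real.sqrt_mul zero_le_two]

theorem le_compositePenalty (hc₂ : 0 ≤ c₂) {pen : ℝ} (hpen : 0 ≤ pen) :
    pen ≤ compositePenalty c₂ m s N pen := by
  have hwidth : 0 ≤ c₂ * √(2 * (m + Real.log s) / N) := by positivity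
  rw [compositePenalty]
  linarith

theorem compositePenalty_mono : Monotone (compositePenalty c₂ m s N) := fun p p' h => by
  unfold compositePenalty
  gcongr

theorem add_confidenceWidth_le_selectionCriterion (hc₂ : 0 ≤ c₂) (hm : 0 ≤ m) (hN : 0 ≤ N)
    (pen L : ℝ) :
    L + pen + c₂ * (confidenceWidth m s N / 2) ≤ selectionCriterion c₂ m s N pen L := by
  have hwidth : confidenceWidth m s N ≤ √(m / N) + √(Real.log s / N) := by
    rw [confidenceWidth, add_div]
    exact sqrt_add_le_sqrt_add_sqrt (by positivity) (by positivity)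
  rw [selectionCriterion]
  linarith [mul_le_mul_of_nonneg_left hwidth hc₂]

theorem selectionCriterion_le_add_confidenceWidth (hc₂ : 0 ≤ c₂) (hm : 0 ≤ m) (hN : 0 ≤ N)
    (pen L : ℝ) :
    selectionCriterion c₂ m s N pen L ≤ L + pen + c₂ * (√2 * confidenceWidth m s N / 2) := by
  have hwidth : √(m / N) + √(Real.log s / N) ≤ √2 * confidenceWidth m s N := by
    rw [confidenceWidth, add_div]
    exact sqrt_add_sqrt_le_sqrt_two_mul (by positivity) (by positivity)
  rw [selectionCriterion]
  linarith [mul_le_mul_of_nonneg_left hwidth hc₂]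

end ConfidenceWidth

section Concentration

variable {Ω F : Type*} [MeasurableSpace Ω] {P : Measure Ω}

theorem one_sub_sum_measure_compl_le_measure_biInter [IsProbabilityMeasure P] {ι : Type*}
    (S : Finset ι) (A : ι → Set Ω) : 1 - ∑ i ∈ S, P (A i)ᶜ ≤ P (⋂ i ∈ S, A i) := by
  rw [tsub_le_iff_right, ← measure_univ (μ := P), ← Set.union_compl_self (⋂ i ∈ S, A i)]
  refine (measure_union_le _ _).trans ?_
  gcongr
  simp only [Set.compl_iInter]
  exact measure_biUnion_finset_le S _

/-- The assumptions on the output `fhat` and the empirical risk `Lhat` of an algorithm that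
processes `N` samples for the class `𝓒`: approximate empirical risk minimization, and concentration
of the empirical risk around `R` at the output and at each fixed member of the class. -/
structure IsRiskEstimator (P : Measure Ω) (𝓒 : Set F) (R : F → ℝ) (c₁ c₂ pen N : ℝ)
    (fhat : Ω → F) (Lhat : Ω → F → ℝ) : Prop where
  ae_le_add_pen : ∀ᵐ ω ∂P, ∀ f ∈ 𝓒, Lhat ω (fhat ω) ≤ Lhat ω f + pen
  measure_output_le : ∀ ε : ℝ, 0 < ε →
    P {ω | pen + c₂ * ε < |Lhat ω (fhat ω) - R (fhat ω)|} ≤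
      ENNReal.ofReal (c₁ * Real.exp (-4 * N * ε ^ 2))
  measure_fixed_le : ∀ f ∈ 𝓒, ∀ ε : ℝ, 0 < ε →
    P {ω | c₂ * ε < |Lhat ω f - R f|} ≤ ENNReal.ofReal (c₁ * Real.exp (-4 * N * ε ^ 2))

/-- The event that the empirical risk is within `δ` of the risk at the comparison function `g` and
within `pen + δ` at the output, and that the output is an approximate empirical minimizer relative
to `g`. -/
def accurateEvent (R : F → ℝ) (pen δ : ℝ) (fhat : Ω → F) (Lhat : Ω → F → ℝ) (g : F) : Set Ω :=
  {ω | |Lhat ω (fhat ω) - R (fhat ω)| ≤ pen + δ ∧ |Lhat ω g - R g| ≤ δ ∧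
    Lhat ω (fhat ω) ≤ Lhat ω g + pen}

theorem IsRiskEstimator.measure_compl_accurateEvent_le {𝓒 : Set F} {R : F → ℝ}
    {c₁ c₂ pen N : ℝ} {fhat : Ω → F} {Lhat : Ω → F → ℝ}
    (h : IsRiskEstimator P 𝓒 R c₁ c₂ pen N fhat Lhat) {g : F} (hg : g ∈ 𝓒) {ε : ℝ} (hε : 0 < ε) :
    P (accurateEvent R pen (c₂ * ε) fhat Lhat g)ᶜ ≤
      2 * ENNReal.ofReal (c₁ * Real.exp (-4 * N * ε ^ 2)) := by
  have hcover : (accurateEvent R pen (c₂ * ε) fhat Lhat g)ᶜ ⊆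
      ({ω | pen + c₂ * ε < |Lhat ω (fhat ω) - R (fhat ω)|} ∪ {ω | c₂ * ε < |Lhat ω g - R g|}) ∪
        {ω | ¬ ∀ f ∈ 𝓒, Lhat ω (fhat ω) ≤ Lhat ω f + pen} := by
    intro ω hω
    by_contra hnot
    simp only [Set.mem_union, Set.mem_ofPred_eq, not_or, not_lt, not_not] at hnot
    exact hω ⟨hnot.1.1, hnot.1.2, hnot.2 g hg⟩
  calc P (accurateEvent R pen (c₂ * ε) fhat Lhat g)ᶜ
    _ ≤ P {ω | pen + c₂ * ε < |Lhat ω (fhat ω) - R (fhat ω)|} +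
          P {ω | c₂ * ε < |Lhat ω g - R g|} +
          P {ω | ¬ ∀ f ∈ 𝓒, Lhat ω (fhat ω) ≤ Lhat ω f + pen} := by
      refine (measure_mono hcover).trans ((measure_union_le _ _).trans ?_)
      gcongr
      exact measure_union_le _ _
    _ ≤ 2 * ENNReal.ofReal (c₁ * Real.exp (-4 * N * ε ^ 2)) := by
      rw [ae_iff.1 h.ae_le_add_pen, add_zero, two_mul]
      exact add_le_add (h.measure_output_le ε hε) (h.measure_fixed_le g hg ε hε)

end Concentration

section Selection

variable {Ω F ι : Type*} {R : F → ℝ} {c₁ c₂ m : ℝ} {s : ℕ} {S : Finset ι} {N pen : ι → ℝ}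
  {fhat : ι → Ω → F} {Lhat : ι → Ω → F → ℝ} {g : ι → F}

theorem risk_le_of_selectionCriterion_le (hc₂ : 0 ≤ c₂) (hm : 0 ≤ m) {i j : ι} (hNi : 0 ≤ N i)
    (hNj : 0 ≤ N j) {ω : Ω}
    (hi : ω ∈ accurateEvent R (pen i) (c₂ * (confidenceWidth m s (N i) / 2)) (fhat i) (Lhat i)
      (g i))
    (hj : ω ∈ accurateEvent R (pen j) (c₂ * (confidenceWidth m s (N j) / 2)) (fhat j) (Lhat j)
      (g j))
    (hle : selectionCriterion c₂ m s (N j) (pen j) (Lhat j ω (fhat j ω)) ≤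
      selectionCriterion c₂ m s (N i) (pen i) (Lhat i ω (fhat i ω))) :
    R (fhat j ω) ≤
      R (g i) + 2 * pen i + c₂ * ((√2 + 1) / 2 * confidenceWidth m s (N i)) := by
  obtain ⟨-, hgi, hmin⟩ := hi
  calc R (fhat j ω)
    _ ≤ Lhat j ω (fhat j ω) + pen j + c₂ * (confidenceWidth m s (N j) / 2) := by
      linarith [(abs_le.1 hj.1).1]
    _ ≤ selectionCriterion c₂ m s (N j) (pen j) (Lhat j ω (fhat j ω)) :=
      add_confidenceWidth_le_selectionCriterion hc₂ hm hNj _ _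
    _ ≤ selectionCriterion c₂ m s (N i) (pen i) (Lhat i ω (fhat i ω)) := hle
    _ ≤ Lhat i ω (fhat i ω) + pen i + c₂ * (√2 * confidenceWidth m s (N i) / 2) :=
      selectionCriterion_le_add_confidenceWidth hc₂ hm hNi _ _
    _ ≤ R (g i) + 2 * pen i + c₂ * ((√2 + 1) / 2 * confidenceWidth m s (N i)) := by
      linarith [(abs_le.1 hgi).2]

variable [MeasurableSpace Ω] {P : Measure Ω} [IsProbabilityMeasure P] {𝓕 : ι → Set F}

theorem ofReal_le_measure_biInter_accurateEvent (hc₁ : 0 ≤ c₁) (hm : 0 ≤ m) (hs : 1 < s)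
    (hSs : S.card ≤ s) (hN : ∀ i ∈ S, 0 < N i) (hg : ∀ i ∈ S, g i ∈ 𝓕 i)
    (hest : ∀ i ∈ S, IsRiskEstimator P (𝓕 i) R c₁ c₂ (pen i) (N i) (fhat i) (Lhat i)) :
    ENNReal.ofReal (1 - 2 * c₁ * Real.exp (-m)) ≤
      P (⋂ i ∈ S, accurateEvent R (pen i) (c₂ * (confidenceWidth m s (N i) / 2)) (fhat i)
        (Lhat i) (g i)) := by
  refine le_trans ?_ (one_sub_sum_measure_compl_le_measure_biInter S _)
  rw [ENNReal.ofReal_sub _ (by positivity), ENNReal.ofReal_one]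
  refine tsub_le_tsub_left ?_ 1
  have hs0 : (0 : ℝ) < s := by exact_mod_cast one_pos.trans hs
  calc ∑ i ∈ S, P (accurateEvent R (pen i) (c₂ * (confidenceWidth m s (N i) / 2)) (fhat i)
        (Lhat i) (g i))ᶜ
    _ ≤ ∑ _i ∈ S, ENNReal.ofReal (2 * c₁ * Real.exp (-m) / s) := by
      refine Finset.sum_le_sum fun i hi => ?_
      have hwidth := confidenceWidth_pos hm hs (hN i hi)
      refine ((hest i hi).measure_compl_accurateEvent_le (hg i hi) (half_pos hwidth)).trans_eq ?_
      rw [exp_neg_four_mul_confidenceWidth hm (by omega) (hN i hi), ← ENNReal.ofReal_ofNat 2,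
        ← ENNReal.ofReal_mul zero_le_two]
      ring_nf
    _ = ENNReal.ofReal (S.card * (2 * c₁ * Real.exp (-m) / s)) := by
      rw [Finset.sum_const, nsmul_eq_mul, ENNReal.ofReal_mul (by positivity),
        ENNReal.ofReal_natCast]
    _ ≤ ENNReal.ofReal (s * (2 * c₁ * Real.exp (-m) / s)) := by gcongr
    _ = ENNReal.ofReal (2 * c₁ * Real.exp (-m)) := by rw [mul_div_cancel₀ _ hs0.ne']

theorem ofReal_le_measure_risk_le_add_compositePenalty {Rstar : ι → ℝ}
    (hRstar : ∀ i, IsGLB (R '' 𝓕 i) (Rstar i)) (hc₁ : 0 ≤ c₁) (hc₂ : 0 < c₂) (hm : 0 ≤ m)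
    (hs : 1 < s) (hSs : S.card ≤ s) (hN : ∀ i, 0 < N i)
    (hest : ∀ i ∈ S, IsRiskEstimator P (𝓕 i) R c₁ c₂ (pen i) (N i) (fhat i) (Lhat i))
    {ihat : Ω → ι} (hihat_mem : ∀ ω, ihat ω ∈ S)
    (hihat_min : ∀ ω, ∀ i ∈ S,
      selectionCriterion c₂ m s (N (ihat ω)) (pen (ihat ω)) (Lhat (ihat ω) ω (fhat (ihat ω) ω)) ≤
        selectionCriterion c₂ m s (N i) (pen i) (Lhat i ω (fhat i ω))) :
    ENNReal.ofReal (1 - 2 * c₁ * Real.exp (-m)) ≤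
      P {ω | ∀ i ∈ S,
        R (fhat (ihat ω) ω) ≤ Rstar i + compositePenalty c₂ m s (N i) (pen i)} := by
  have hnear : ∀ i, ∃ f ∈ 𝓕 i,
      R f < Rstar i + c₂ * ((√2 - 1) / 2 * confidenceWidth m s (N i)) := by
    intro i
    have hslack : 0 < √2 - 1 := sub_pos.2 Real.one_lt_sqrt_two
    have hwidth := confidenceWidth_pos hm hs (hN i)
    obtain ⟨_, ⟨f, hf, rfl⟩, -, hlt⟩ := (hRstar i).exists_between_self_add
      (show 0 < c₂ * ((√2 - 1) / 2 * confidenceWidth m s (N i)) by positivity)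
    exact ⟨f, hf, hlt⟩
  choose g hg hgR using hnear
  refine (ofReal_le_measure_biInter_accurateEvent hc₁ hm hs hSs (fun i _ => hN i)
    (fun i _ => hg i) hest).trans (measure_mono fun ω hω i hi => ?_)
  rw [Set.mem_iInter₂] at hω
  have hselected := risk_le_of_selectionCriterion_le hc₂.le hm (hN i).le (hN (ihat ω)).le
    (hω i hi) (hω _ (hihat_mem ω)) (hihat_min ω i hi)
  rw [compositePenalty_eq]
  linarith [hgR i]

end Selection

section CoarseGrid

variable {ι : Type*} [Preorder ι] [OrderBot ι]

theorem le_add_two_mul_of_forall_grid {s : ℕ} (hs : 0 < s) {p Rstar : ι → ℝ} {ρ : ℝ}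
    (hp : 0 ≤ p ⊥) (hpmin : ∀ i, p ⊥ ≤ p i) (hanti : Antitone Rstar) (hRstar : ∀ i, 0 ≤ Rstar i)
    (hbot : Rstar ⊥ ≤ 2 ^ (s - 1) * p ⊥) {jj : ℕ → ι}
    (hjj : ∀ k < s, IsGreatest {j | p j ≤ 2 ^ k * p ⊥} (jj k))
    (hgrid : ∀ k < s, ρ ≤ Rstar (jj k) + p (jj k)) (i : ι) :
    ρ ≤ Rstar i + 2 * p i := by
  by_cases hi : p i ≤ 2 ^ (s - 1) * p ⊥
  · obtain ⟨k, hks, hik, hki⟩ := exists_le_two_pow_mul_le_two_mul hp (hpmin i) hi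
    have hk : k < s := by omega
    calc ρ ≤ Rstar (jj k) + p (jj k) := hgrid k hk
      _ ≤ Rstar i + 2 * p i := add_le_add (hanti ((hjj k hk).2 hik)) ((hjj k hk).1.trans hki)
  · have hfirst : p (jj 0) ≤ p ⊥ := by simpa using (hjj 0 hs).1
    calc ρ ≤ Rstar (jj 0) + p (jj 0) := hgrid 0 hs
      _ ≤ Rstar ⊥ + p ⊥ := add_le_add (hanti bot_le) hfirst
      _ ≤ p i + p i := add_le_add (hbot.trans (le_of_not_ge hi)) (hpmin i)
      _ ≤ Rstar i + 2 * p i := by linarith [hRstar i]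

variable {Ω F : Type*} [MeasurableSpace Ω] {P : Measure Ω} [IsProbabilityMeasure P]
  [DecidableEq ι] {𝓕 : ι → Set F} {R : F → ℝ} {Rstar : ι → ℝ} {c₁ c₂ m : ℝ} {s : ℕ}
  {N pen : ι → ℝ} {fhat : ι → Ω → F} {Lhat : ι → Ω → F → ℝ} {jj : ℕ → ι} {ihat : Ω → ι}

theorem ofReal_le_measure_risk_le_add_two_mul_compositePenalty (h𝓕 : Monotone 𝓕)
    (hR : ∀ f, 0 ≤ R f) (hRstar : ∀ i, IsGLB (R '' 𝓕 i) (Rstar i)) (hc₁ : 0 ≤ c₁) (hc₂ : 0 < c₂)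
    (hm : 0 ≤ m) (hs : 1 < s) (hN : ∀ i, 0 < N i) (hpen : 0 ≤ pen ⊥)
    (hmin : ∀ i, compositePenalty c₂ m s (N ⊥) (pen ⊥) ≤ compositePenalty c₂ m s (N i) (pen i))
    (hbot : Rstar ⊥ ≤ 2 ^ (s - 1) * compositePenalty c₂ m s (N ⊥) (pen ⊥))
    (hjj : ∀ k < s, IsGreatest {j | compositePenalty c₂ m s (N j) (pen j) ≤
      2 ^ k * compositePenalty c₂ m s (N ⊥) (pen ⊥)} (jj k))
    (hest : ∀ i ∈ (Finset.range s).image jj,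
      IsRiskEstimator P (𝓕 i) R c₁ c₂ (pen i) (N i) (fhat i) (Lhat i))
    (hihat_mem : ∀ ω, ihat ω ∈ (Finset.range s).image jj)
    (hihat_min : ∀ ω, ∀ i ∈ (Finset.range s).image jj,
      selectionCriterion c₂ m s (N (ihat ω)) (pen (ihat ω)) (Lhat (ihat ω) ω (fhat (ihat ω) ω)) ≤
        selectionCriterion c₂ m s (N i) (pen i) (Lhat i ω (fhat i ω))) :
    ENNReal.ofReal (1 - 2 * c₁ * Real.exp (-m)) ≤
      P {ω | ∀ i,
        R (fhat (ihat ω) ω) ≤ Rstar i + 2 * compositePenalty c₂ m s (N i) (pen i)} := by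
  have hcard : ((Finset.range s).image jj).card ≤ s := by
    simpa using Finset.card_image_le (s := Finset.range s) (f := jj)
  have hanti : Antitone Rstar := fun i j hij =>
    (hRstar i).mono (hRstar j) (Set.image_mono (h𝓕 hij))
  have hRstar_nonneg : ∀ i, 0 ≤ Rstar i := fun i =>
    (hRstar i).2 (Set.forall_mem_image.2 fun f _ => hR f)
  refine (ofReal_le_measure_risk_le_add_compositePenalty hRstar hc₁ hc₂ hm hs hcard hN hest
    hihat_mem hihat_min).trans (measure_mono fun ω hω => ?_)
  exact le_add_two_mul_of_forall_grid (by omega) (hpen.trans (le_compositePenalty hc₂.le hpen)) hmin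
    hanti hRstar_nonneg hbot hjj fun k hk =>
      hω _ (Finset.mem_image_of_mem jj (Finset.mem_range.2 hk))

end CoarseGrid

section LinearClassification

theorem one_le_two_mul_mul_sqrt_inv_mul {a M N : ℝ} (ha : 0 < a) (hN : 0 < N) (hNM : N ≤ M)
    (haM : 1 / (4 * a ^ 2) ≤ M) : 1 ≤ 2 * a * √N⁻¹ * M := by
  have hM : 0 < M := hN.trans_le hNM
  have hsqrt : 1 ≤ 2 * a * √M := by
    rw [div_le_iff₀ (by positivity)] at haM
    refine (one_le_sq_iff₀ (by positivity)).1 ?_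
    rw [mul_pow, Real.sq_sqrt hM.le]
    linarith
  calc 1 ≤ 2 * a * √M := hsqrt
    _ = 2 * a * √M⁻¹ * M := by
      rw [Real.sqrt_inv, mul_assoc _ _ M, inv_mul_eq_div, Real.div_sqrt]
    _ ≤ 2 * a * √N⁻¹ * M := by gcongr

variable {a c₂ m M : ℝ}

theorem le_two_pow_mul_compositePenalty {B : ℝ} {s : ℕ} (hB : 0 ≤ B) (ha : 0 < a) (hc₂ : 0 ≤ c₂)
    (hM : 0 < M) (haM : 1 / (4 * a ^ 2) ≤ M) (hs : s = coarseGridSize (B * M)) :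
    B ≤ 2 ^ (s - 1) * compositePenalty c₂ m s (M / s) (2 * a * √(M / s)⁻¹) := by
  have hs1 : (1 : ℝ) ≤ s := by rw [hs, coarseGridSize]; push_cast; linarith
  have hpen : 1 ≤ 2 * a * √(M / s)⁻¹ * M :=
    one_le_two_mul_mul_sqrt_inv_mul ha (by positivity) (div_le_self hM.le hs1) haM
  calc B ≤ 2 ^ (s - 1) * (2 * a * √(M / s)⁻¹) :=
        hs ▸ le_two_pow_coarseGridSize_mul hB hM.le (by positivity) (hs ▸ hpen)
    _ ≤ _ := by gcongr; exact le_compositePenalty hc₂ (by positivity)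

theorem two_mul_compositePenalty_le {L : ℝ} {s : ℕ} (ha : 0 ≤ a) (hc₂ : 0 ≤ c₂) (hM : 0 ≤ M)
    (hs : 0 < s) (hsL : s ≤ L) :
    2 * compositePenalty c₂ m s (M / s) (2 * a * √(M / s)⁻¹) ≤
      √(L / M) * (8 * a + √8 * c₂ * √(m + Real.log L)) := by
  have hsqrt8 : √8 = 2 * √2 := by
    rw [show (8 : ℝ) = 2 ^ 2 * 2 by norm_num, Real.sqrt_mul (by norm_num),
      Real.sqrt_sq zero_le_two]
  calc 2 * compositePenalty c₂ m s (M / s) (2 * a * √(M / s)⁻¹)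
    _ = √(s / M) * (8 * a + √8 * c₂ * √(m + Real.log s)) := by
      rw [compositePenalty, div_eq_mul_inv _ (M / s), inv_div, Real.sqrt_mul' _ (by positivity),
        Real.sqrt_mul zero_le_two, hsqrt8]
      ring
    _ ≤ √(L / M) * (8 * a + √8 * c₂ * √(m + Real.log L)) := by gcongr

theorem stmt5_general {Ω F ι : Type*} [MeasurableSpace Ω] (P : Measure Ω)
    [IsProbabilityMeasure P] [Preorder ι] [OrderBot ι] [DecidableEq ι]
    (𝓕 : ι → Set F) (h𝓕 : Monotone 𝓕) (R : F → ℝ) (hR : ∀ f, 0 ≤ R f)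
    (Rstar : ι → ℝ) (hRstar : ∀ i, IsGLB (R '' 𝓕 i) (Rstar i))
    (c₁ c₂ m : ℝ) (hc₁ : 0 ≤ c₁) (hc₂ : 0 < c₂) (hm : 0 ≤ m)
    (B : ℝ) (hBpos : 0 < B) (hB : Rstar ⊥ ≤ B)
    (d n Xbar : ℝ) (hd : 0 < d) (hn : 0 < n) (hX : 0 < Xbar)
    (r : ι → ℝ) (hr_bot : 0 < r ⊥) (hr : Monotone r)
    (T : ℝ) (hT : 0 < T) (hT1 : d / B ≤ n * T) (hT2 : d / (4 * r ⊥ ^ 2 * Xbar ^ 2) ≤ n * T)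
    (s : ℕ) (hs : s = coarseGridSize (B * (n * T / d)))
    (N : ι → ℝ) (hN : ∀ i, N i = n * (T / s) / d)
    (pen : ι → ℝ) (hpen : ∀ i, pen i = 2 * r i * Xbar * √(d / (n * (T / s))))
    (jj : ℕ → ι)
    (hjj : ∀ k < s, IsGreatest {j | compositePenalty c₂ m s (N j) (pen j) ≤
      2 ^ k * compositePenalty c₂ m s (N ⊥) (pen ⊥)} (jj k))
    (S : Finset ι) (hS : S = (Finset.range s).image jj)
    (fhat : ι → Ω → F) (Lhat : ι → Ω → F → ℝ)
    (hest : ∀ i ∈ S, IsRiskEstimator P (𝓕 i) R c₁ c₂ (pen i) (N i) (fhat i) (Lhat i))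
    (ihat : Ω → ι) (hihat_mem : ∀ ω, ihat ω ∈ S)
    (hihat_min : ∀ ω, ∀ i ∈ S,
      selectionCriterion c₂ m s (N (ihat ω)) (pen (ihat ω)) (Lhat (ihat ω) ω (fhat (ihat ω) ω)) ≤
        selectionCriterion c₂ m s (N i) (pen i) (Lhat i ω (fhat i ω))) :
    ENNReal.ofReal (1 - 2 * c₁ * Real.exp (-m)) ≤
      P {ω | ∀ i, R (fhat (ihat ω) ω) ≤
        Rstar i + √(d * Real.logb 2 (16 * B * n * T / d) / (n * T)) *
          (8 * r i * Xbar + √8 * c₂ * √(m + Real.log (Real.logb 2 (16 * B * n * T / d))))} := by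
  subst hS
  obtain ⟨M, hM⟩ : ∃ M, M = n * T / d := ⟨_, rfl⟩
  have hM_pos : 0 < M := by rw [hM]; positivity
  obtain rfl : N = fun _ => M / s := funext fun i => by rw [hN, hM]; ring
  obtain rfl : pen = fun i => 2 * (r i * Xbar) * √(M / s)⁻¹ :=
    funext fun i => by rw [hpen, hM, mul_assoc 2]; congr 2; field_simp
  have hs1 : 1 < s := by rw [hs, coarseGridSize]; omega
  have hr_pos : ∀ i, 0 < r i := fun i => hr_bot.trans_le (hr bot_le)
  have hBM : 1 ≤ B * M := by
    rw [div_le_iff₀' hBpos] at hT1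
    rwa [hM, ← mul_div_assoc, one_le_div hd]
  have haM : 1 / (4 * (r ⊥ * Xbar) ^ 2) ≤ M := by
    rwa [hM, le_div_iff₀ hd, one_div_mul_eq_div, mul_pow, ← mul_assoc]
  have hsL : s ≤ Real.logb 2 (16 * (B * M)) := by
    rw [hs, ← hM]
    exact coarseGridSize_le_logb hBM
  have hbot := hB.trans (le_two_pow_mul_compositePenalty (m := m) hBpos.le
    (mul_pos hr_bot hX) hc₂.le hM_pos haM (hM ▸ hs))
  refine (ofReal_le_measure_risk_le_add_two_mul_compositePenalty h𝓕 hR hRstar hc₁ hc₂ hm hs1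
    (fun _ => by positivity) (by positivity)
    (fun i => compositePenalty_mono (by gcongr; exact hr bot_le)) hbot hjj hest hihat_mem
    hihat_min).trans (measure_mono fun ω hω i => (hω i).trans ?_)
  rw [show 16 * B * n * T / d = 16 * (B * M) by rw [hM]; ring, mul_comm d, ← div_div_eq_mul_div,
    ← hM, mul_assoc 8]
  exact add_le_add_right (two_mul_compositePenalty_le (mul_pos (hr_pos i) hX).le hc₂.le
    hM_pos.le (by omega) hsL) _

end LinearClassification

/-- Corollary 1(a) of Agarwal–Bartlett–Duchi: the coarse-grid model-selection
algorithm applied to linear classification with nested norm balls, where every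
class processes `nᵢ(t) = n t / d` samples under budget `t` and
`penᵢ(t) = 2 rᵢ X̄ √(d / (n t))`.  Provided `nT ≥ d/B` and
`nT ≥ d/(4 r₁² X̄²)`, with probability at least `1 - 2c₁ exp(-m)` the output
satisfies the stated oracle inequality.  (Classes are indexed by `ℕ`, with
index `0` playing the role of class `1`; budgets and sample sizes are real.) -/
theorem stmt5 {Ω : Type*} [MeasurableSpace Ω] (P : Measure Ω) [IsProbabilityMeasure P]
    {F : Type*} (𝓕 : ℕ → Set F)
    (hnested : ∀ i j : ℕ, i ≤ j → 𝓕 i ⊆ 𝓕 j)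
    (R : F → ℝ) (hRnonneg : ∀ f, 0 ≤ R f)
    (Rstar : ℕ → ℝ) (hRstar : ∀ i, IsGLB (R '' 𝓕 i) (Rstar i))
    (c₁ c₂ : ℝ) (hc₁ : 0 < c₁) (hc₂ : 0 < c₂)
    (m : ℝ) (hm : 0 ≤ m)
    (B : ℝ) (hBpos : 0 < B) (hB : Rstar 0 ≤ B)
    (d n Xbar : ℝ) (hd : 0 < d) (hn : 0 < n) (hX : 0 < Xbar)
    (r : ℕ → ℝ) (hr0 : 0 < r 0) (hrm : StrictMono r)
    (hrdiv : Filter.Tendsto r Filter.atTop Filter.atTop)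
    (T : ℝ) (hT : 0 < T)
    (hT1 : d / B ≤ n * T) (hT2 : d / (4 * (r 0) ^ 2 * Xbar ^ 2) ≤ n * T)
    (nsamp : ℕ → ℝ → ℝ) (hnsamp : ∀ (i : ℕ) (t : ℝ), nsamp i t = n * t / d)
    (pen : ℕ → ℝ → ℝ)
    (hpen : ∀ (i : ℕ) (t : ℝ), pen i t = 2 * r i * Xbar * Real.sqrt (d / (n * t)))
    (fhat : ℕ → ℝ → Ω → F) (Lhat : ℕ → ℝ → Ω → F → ℝ)
    (hmem : ∀ i t ω, fhat i t ω ∈ 𝓕 i)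
    (hERM : ∀ (i : ℕ) (t : ℝ), ∀ᵐ ω ∂P, ∀ f ∈ 𝓕 i,
      Lhat i t ω (fhat i t ω) ≤ Lhat i t ω f + pen i t)
    (hconc1 : ∀ (i : ℕ) (t ε : ℝ), 0 < ε →
      P {ω | pen i t + c₂ * ε < |Lhat i t ω (fhat i t ω) - R (fhat i t ω)|}
        ≤ ENNReal.ofReal (c₁ * Real.exp (-4 * nsamp i t * ε ^ 2)))
    (hconc2 : ∀ (i : ℕ) (t : ℝ), ∀ f ∈ 𝓕 i, ∀ ε : ℝ, 0 < ε →
      P {ω | c₂ * ε < |Lhat i t ω f - R f|}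
        ≤ ENNReal.ofReal (c₁ * Real.exp (-4 * nsamp i t * ε ^ 2)))
    (s : ℕ) (hs : s = ⌈Real.logb 2 (1 + B * (n * T / d))⌉₊ + 2)
    (pbar : ℕ → ℝ)
    (hpbar : ∀ i, pbar i = 2 * pen i (T / s)
      + c₂ * Real.sqrt (2 * (m + Real.log s) / nsamp i (T / s)))
    (jj : ℕ → ℕ)
    (hjj : ∀ k < s, pbar (jj k) ≤ 2 ^ k * pbar 0 ∧
      ∀ j : ℕ, pbar j ≤ 2 ^ k * pbar 0 → j ≤ jj k)
    (S : Finset ℕ) (hSdef : S = (Finset.range s).image jj)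
    (ihat : Ω → ℕ)
    (hihat_mem : ∀ ω, ihat ω ∈ S)
    (hihat_min : ∀ ω, ∀ i ∈ S,
      Lhat (ihat ω) (T / s) ω (fhat (ihat ω) (T / s) ω) + pen (ihat ω) (T / s)
        + c₂ / 2 * Real.sqrt (m / nsamp (ihat ω) (T / s))
        + c₂ / 2 * Real.sqrt (Real.log s / nsamp (ihat ω) (T / s))
      ≤ Lhat i (T / s) ω (fhat i (T / s) ω) + pen i (T / s)
        + c₂ / 2 * Real.sqrt (m / nsamp i (T / s))
        + c₂ / 2 * Real.sqrt (Real.log s / nsamp i (T / s))) :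
    ENNReal.ofReal (1 - 2 * c₁ * Real.exp (-m)) ≤
      P {ω | ∀ i : ℕ, R (fhat (ihat ω) (T / s) ω) ≤
        Rstar i + Real.sqrt (d * Real.logb 2 (16 * B * n * T / d) / (n * T))
          * (8 * r i * Xbar
            + Real.sqrt 8 * c₂
              * Real.sqrt (m + Real.log (Real.logb 2 (16 * B * n * T / d))))} := by
  obtain rfl : pbar = _ := funext hpbar
  exact stmt5_general P 𝓕 hnested R hRnonneg Rstar hRstar c₁ c₂ m hc₁.le hc₂ hm B hBpos hB d n Xbar
    hd hn hX r hr0 hrm.monotone T hT hT1 hT2 s hs (nsamp · (T / s)) (hnsamp · _) (pen · (T / s))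
    (hpen · _) jj (fun k hk => ⟨(hjj k hk).1, fun j => (hjj k hk).2 j⟩) S hSdef (fhat · (T / s))
    (Lhat · (T / s)) (fun i _ => ⟨hERM i _, hconc1 i _, hconc2 i _⟩) ihat hihat_mem hihat_min
end

section
/- (Deterministic fast-rate comparison, higher classes.) Suppose the events E1 and E2 hold for all pairs i, j ∈ S with |S| = s, assume ζ ≥ 17/2 and κ ≥ 7/2, and let î be selected by the rule: î is the largest index in S such that L̂_{î}(f̂_{î}) + ζ·pen_{î}(n_{î}) + κ·c₂·ε_{î} ≤ L̂_{î}(f̂ⱼ) + ζ·penⱼ(nⱼ) for every j ∈ S with j < î. Then for every j ∈ S with j ≥ î, R(f̂_{î}) ≤ R(fⱼ*) + s·[ (2ζ + 3)·penⱼ(nⱼ) + (2κ + 1)·c₂·εⱼ ]. -/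
/-!
A class `j` above `î` fails the selection rule, so some smaller class `k` has an `f̂ₖ` whose
empirical risk on the samples of `j` is nearly that of `f̂ⱼ`. By E1 the risk of `f̂ₖ` exceeds
`R(fⱼ*)` by at most `Bⱼ = (2ζ + 3) penⱼ + (2κ + 1) δⱼ`, where `δ = c₂ε`, and by nesting so does
`R(f*_{max(î, k)})`. Descending from `j` in this way reaches `î` after visiting each class of `S`
at most once, so the total loss is at most the sum of the `Bₘ`, each of which is at most `Bⱼ`.
-/

section Descent

variable {ι M : Type*} [PartialOrder ι] [DecidableLE ι]
  [AddCommMonoid M] [PartialOrder M] [IsOrderedAddMonoid M]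
  {S : Finset ι} {B r : ι → M} {i j m : ι}

lemma add_sum_filter_le_sum_filter_of_lt (hB : ∀ k ∈ S, 0 ≤ B k) (hj : j ∈ S) (hij : i ≤ j)
    (hmj : m < j) :
    B j + ∑ k ∈ S with i ≤ k ∧ k ≤ m, B k ≤ ∑ k ∈ S with i ≤ k ∧ k ≤ j, B k := by
  classical
  have hj_notMem : j ∉ S.filter fun k ↦ i ≤ k ∧ k ≤ m := fun h ↦
    hmj.not_ge (Finset.mem_filter.1 h).2.2
  rw [← Finset.sum_insert hj_notMem]
  refine Finset.sum_le_sum_of_subset_of_nonneg (Finset.insert_subset ?_ ?_)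
    fun k hk _ ↦ hB k (Finset.mem_of_mem_filter k hk)
  · exact Finset.mem_filter.2 ⟨hj, hij, le_rfl⟩
  · exact Finset.monotone_filter_right S fun k _ hk ↦ ⟨hk.1, hk.2.trans hmj.le⟩

lemma le_add_sum_of_descent {x : M} (hB : ∀ k ∈ S, 0 ≤ B k) (hbase : x ≤ r i + B i)
    (hstep : ∀ j ∈ S, i < j → ∃ m ∈ S, i ≤ m ∧ m < j ∧ r m ≤ r j + B j)
    (hj : j ∈ S) (hij : i ≤ j) :
    x ≤ r j + ∑ k ∈ S with i ≤ k ∧ k ≤ j, B k := by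
  refine (S.finite_toSet.wellFoundedOn (r := (· < ·))).induction
    (P := fun j ↦ i ≤ j → x ≤ r j + ∑ k ∈ S with i ≤ k ∧ k ≤ j, B k) hj ?_ hij
  intro j hj ih hij
  obtain rfl | hlt := hij.eq_or_lt
  · refine hbase.trans (add_le_add_right (Finset.single_le_sum
      (fun k hk ↦ hB k (Finset.mem_of_mem_filter k hk)) ?_) _)
    exact Finset.mem_filter.2 ⟨hj, le_rfl, le_rfl⟩
  · obtain ⟨m, hm, him, hmj, hrm⟩ := hstep j hj hlt
    calc
      x ≤ r m + ∑ k ∈ S with i ≤ k ∧ k ≤ m, B k := ih m hm hmj him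
      _ ≤ r j + B j + ∑ k ∈ S with i ≤ k ∧ k ≤ m, B k := add_le_add_left hrm _
      _ = r j + (B j + ∑ k ∈ S with i ≤ k ∧ k ≤ m, B k) := add_assoc _ _ _
      _ ≤ r j + ∑ k ∈ S with i ≤ k ∧ k ≤ j, B k :=
        add_le_add_right (add_sum_filter_le_sum_filter_of_lt hB hj hij hmj) _

end Descent

/-- The excess risk `(2ζ + 3) p + (2κ + 1) δ` that a class with penalty `p` and deviation level `δ`
contributes; the paper's `c₂ε` is the single parameter `δ`. -/
def excessBound (ζ κ p δ : ℝ) : ℝ := (2 * ζ + 3) * p + (2 * κ + 1) * δ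

lemma excessBound_nonneg {ζ κ p δ : ℝ} (hζ : 0 ≤ ζ) (hκ : 0 ≤ κ) (hp : 0 ≤ p) (hδ : 0 ≤ δ) :
    0 ≤ excessBound ζ κ p δ := by
  unfold excessBound
  positivity

lemma excessBound_le_excessBound {ζ κ p p' δ δ' : ℝ} (hζ : 0 ≤ ζ) (hκ : 0 ≤ κ) (hp : p ≤ p')
    (hδ : δ ≤ δ') : excessBound ζ κ p δ ≤ excessBound ζ κ p' δ' := by
  unfold excessBound
  gcongr

lemma risk_le_add_excessBound {F : Type*} {R L : F → ℝ} {f fhat fstar : F} {ζ κ p δ : ℝ}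
    (hE1 : R f - R fstar - 2 * (L f - L fstar) ≤ p + δ)
    (hERM : L fhat ≤ L fstar + p) (hf : L f ≤ L fhat + ζ * p + κ * δ) :
    R f ≤ R fstar + excessBound ζ κ p δ := by
  unfold excessBound
  linarith

section Selection

variable {ι F : Type*} [LinearOrder ι] {𝓕 : ι → Set F} {R : F → ℝ} {S : Finset ι}
  {fstar fhat : ι → F} {L : ι → F → ℝ} {pen δ : ι → ℝ} {ζ κ : ℝ} {i j : ι}

/-- The condition in the selection rule: on the samples of class `i`, the penalized empirical risk
of `f̂ᵢ` beats that of every smaller class of `S` by the margin `κ δᵢ`. The selected index is the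
largest `i ∈ S` with this property. -/
def BeatsSmallerClasses (S : Finset ι) (L : ι → F → ℝ) (fhat : ι → F) (pen δ : ι → ℝ) (ζ κ : ℝ)
    (i : ι) : Prop :=
  ∀ j ∈ S, j < i → L i (fhat i) + ζ * pen i + κ * δ i ≤ L i (fhat j) + ζ * pen j

lemma exists_risk_le_of_not_beatsSmallerClasses (hnested : MonotoneOn 𝓕 S)
    (hfstar_min : ∀ m ∈ S, ∀ f ∈ 𝓕 m, R (fstar m) ≤ R f)
    (hmem : ∀ k ∈ S, fhat k ∈ 𝓕 k) (hERM : L j (fhat j) ≤ L j (fstar j) + pen j)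
    (hpen : ∀ k ∈ S, 0 ≤ pen k) (hζ : 0 ≤ ζ)
    (hE1 : ∀ f ∈ 𝓕 j, R f - R (fstar j) - 2 * (L j f - L j (fstar j)) ≤ pen j + δ j)
    (hi : i ∈ S) (hj : j ∈ S) (hij : i < j) (hfail : ¬ BeatsSmallerClasses S L fhat pen δ ζ κ j) :
    ∃ m ∈ S, i ≤ m ∧ m < j ∧ R (fstar m) ≤ R (fstar j) + excessBound ζ κ (pen j) (δ j) := by
  obtain ⟨k, hk, hkj, hlt⟩ : ∃ k ∈ S, k < j ∧
      L j (fhat k) + ζ * pen k < L j (fhat j) + ζ * pen j + κ * δ j := by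
    simpa only [BeatsSmallerClasses, not_forall, not_le, exists_prop] using hfail
  have hmax : max i k ∈ S := by
    obtain h | h := max_choice i k <;> rwa [h]
  have hL : L j (fhat k) ≤ L j (fhat j) + ζ * pen j + κ * δ j := by
    linarith [mul_nonneg hζ (hpen k hk)]
  refine ⟨max i k, hmax, le_max_left i k, max_lt hij hkj, ?_⟩
  calc
    R (fstar (max i k)) ≤ R (fhat k) :=
      hfstar_min _ hmax _ (hnested hk hmax (le_max_right i k) (hmem k hk))
    _ ≤ R (fstar j) + excessBound ζ κ (pen j) (δ j) :=
      risk_le_add_excessBound (hE1 _ (hnested hk hj hkj.le (hmem k hk))) hERM hL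

theorem risk_le_add_sum_excessBound (hnested : MonotoneOn 𝓕 S)
    (hfstar_min : ∀ k ∈ S, ∀ f ∈ 𝓕 k, R (fstar k) ≤ R f) (hmem : ∀ k ∈ S, fhat k ∈ 𝓕 k)
    (hERM : ∀ k ∈ S, L k (fhat k) ≤ L k (fstar k) + pen k)
    (hpen : ∀ k ∈ S, 0 ≤ pen k) (hδ : ∀ k ∈ S, 0 ≤ δ k) (hζ : 0 ≤ ζ) (hκ : 0 ≤ κ)
    (hE1 : ∀ k ∈ S, ∀ f ∈ 𝓕 k,
      R f - R (fstar k) - 2 * (L k f - L k (fstar k)) ≤ pen k + δ k)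
    (hi : i ∈ S) (hmax : ∀ k ∈ S, BeatsSmallerClasses S L fhat pen δ ζ κ k → k ≤ i)
    (hj : j ∈ S) (hij : i ≤ j) :
    R (fhat i) ≤
      R (fstar j) + ∑ k ∈ S with i ≤ k ∧ k ≤ j, excessBound ζ κ (pen k) (δ k) := by
  refine le_add_sum_of_descent (r := fun k ↦ R (fstar k))
    (fun k hk ↦ excessBound_nonneg hζ hκ (hpen k hk) (hδ k hk)) ?_ ?_ hj hij
  · have hL : L i (fhat i) ≤ L i (fhat i) + ζ * pen i + κ * δ i := by
      linarith [mul_nonneg hζ (hpen i hi), mul_nonneg hκ (hδ i hi)]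
    exact risk_le_add_excessBound (hE1 i hi _ (hmem i hi)) (hERM i hi) hL
  · intro k hk hik
    exact exists_risk_le_of_not_beatsSmallerClasses hnested hfstar_min hmem (hERM k hk)
      hpen hζ (hE1 k hk) hi hk hik fun h ↦ hik.not_ge (hmax k hk h)

theorem stmt9_general (hnested : MonotoneOn 𝓕 S)
    (hfstar_mem : ∀ k ∈ S, fstar k ∈ 𝓕 k) (hfstar_min : ∀ k ∈ S, ∀ f ∈ 𝓕 k, R (fstar k) ≤ R f)
    (hmem : ∀ k ∈ S, fhat k ∈ 𝓕 k) (hERM : ∀ k ∈ S, ∀ f ∈ 𝓕 k, L k (fhat k) ≤ L k f + pen k)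
    (hδ : ∀ k ∈ S, 0 ≤ δ k) (hpen_mono : MonotoneOn pen S) (hδ_mono : MonotoneOn δ S)
    (hζ : 0 ≤ ζ) (hκ : 0 ≤ κ)
    (hE1 : ∀ k ∈ S, ∀ f ∈ 𝓕 k,
      R f - R (fstar k) - 2 * (L k f - L k (fstar k)) ≤ pen k + δ k)
    (hi : i ∈ S) (hmax : ∀ k ∈ S, BeatsSmallerClasses S L fhat pen δ ζ κ k → k ≤ i)
    (hj : j ∈ S) (hij : i ≤ j) :
    R (fhat i) ≤ R (fstar j) + S.card * excessBound ζ κ (pen j) (δ j) := by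
  have hpen : ∀ k ∈ S, 0 ≤ pen k := fun k hk ↦
    nonneg_of_le_add_right (hERM k hk _ (hmem k hk))
  have hsum : ∑ k ∈ S with i ≤ k ∧ k ≤ j, excessBound ζ κ (pen k) (δ k) ≤
      S.card * excessBound ζ κ (pen j) (δ j) := by
    calc
      _ ≤ ∑ k ∈ S with i ≤ k ∧ k ≤ j, excessBound ζ κ (pen j) (δ j) := by
        refine Finset.sum_le_sum fun k hk ↦ ?_
        obtain ⟨hkS, -, hkj⟩ := Finset.mem_filter.1 hk
        exact excessBound_le_excessBound hζ hκ (hpen_mono hkS hj hkj) (hδ_mono hkS hj hkj)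
      _ ≤ ∑ _ ∈ S, excessBound ζ κ (pen j) (δ j) :=
        Finset.sum_le_sum_of_subset_of_nonneg (Finset.filter_subset _ S)
          fun _ _ _ ↦ excessBound_nonneg hζ hκ (hpen j hj) (hδ j hj)
      _ = S.card * excessBound ζ κ (pen j) (δ j) := by rw [Finset.sum_const, nsmul_eq_mul]
  exact (risk_le_add_sum_excessBound hnested hfstar_min hmem
    (fun k hk ↦ hERM k hk _ (hfstar_mem k hk)) hpen hδ hζ hκ hE1 hi hmax hj hij).trans
      (add_le_add_right hsum _)

end Selection

/-- Deterministic fast-rate comparison for higher classes (Lemma 5 /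
`lemma:nesting-fast-upper` of Agarwal–Bartlett–Duchi): under the events E1 and
E2 for all pairs in `S` (with `|S| = s`), `ζ ≥ 17/2`, `κ ≥ 7/2`, and `î`
chosen as the largest index in `S` satisfying the selection rule against all
smaller grid classes, for every `j ∈ S` with `j ≥ î`,
`R(f̂_î) ≤ R(fⱼ*) + s[(2ζ+3) penⱼ(nⱼ) + (2κ+1) c₂ εⱼ]`. -/
theorem stmt9 {F : Type*} (𝓕 : ℕ → Set F)
    (hnested : ∀ i j : ℕ, i ≤ j → 𝓕 i ⊆ 𝓕 j)
    (R : F → ℝ) (S : Finset ℕ) (s : ℕ) (hcard : S.card = s)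
    (fstar : ℕ → F) (hfstar_mem : ∀ i, fstar i ∈ 𝓕 i)
    (hfstar_min : ∀ i, ∀ f ∈ 𝓕 i, R (fstar i) ≤ R f)
    (nsz : ℕ → ℕ) (pen : ℕ → ℕ → ℝ)
    (hpenmono : ∀ j i : ℕ, j ≤ i → ∀ n : ℕ, pen j n ≤ pen i n)
    (Lhat : ℕ → F → ℝ) (fhat : ℕ → F) (hmem : ∀ i, fhat i ∈ 𝓕 i)
    (hERM : ∀ i ∈ S, ∀ f ∈ 𝓕 i, Lhat i (fhat i) ≤ Lhat i f + pen i (nsz i))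
    (eps : ℕ → ℝ) (heps : ∀ i, 0 < eps i)
    (hpen_nondec : ∀ i ∈ S, ∀ j ∈ S, j ≤ i → pen j (nsz j) ≤ pen i (nsz i))
    (heps_nondec : ∀ i ∈ S, ∀ j ∈ S, j ≤ i → eps j ≤ eps i)
    (ζ κ c₂ : ℝ) (hζ : 17 / 2 ≤ ζ) (hκ : 7 / 2 ≤ κ) (hc₂ : 0 < c₂)
    (hE1 : ∀ i ∈ S, ∀ j ∈ S, ∀ f ∈ 𝓕 j,
      R f - R (fstar j) - 2 * (Lhat i f - Lhat i (fstar j)) ≤ pen j (nsz i) + c₂ * eps i)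
    (hE2 : ∀ i ∈ S, ∀ j ∈ S, ∀ f ∈ 𝓕 j,
      Lhat i f - Lhat i (fstar j) - 2 * (R f - R (fstar j)) ≤ pen j (nsz i) + c₂ * eps i)
    (ihat : ℕ) (hihat_mem : ihat ∈ S)
    (hihat_sel : ∀ j ∈ S, j < ihat →
      Lhat ihat (fhat ihat) + ζ * pen ihat (nsz ihat) + κ * c₂ * eps ihat
        ≤ Lhat ihat (fhat j) + ζ * pen j (nsz j))
    (hihat_max : ∀ i' ∈ S,
      (∀ j ∈ S, j < i' →
        Lhat i' (fhat i') + ζ * pen i' (nsz i') + κ * c₂ * eps i'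
          ≤ Lhat i' (fhat j) + ζ * pen j (nsz j)) → i' ≤ ihat) :
    ∀ j ∈ S, ihat ≤ j →
      R (fhat ihat) ≤ R (fstar j) +
        (s : ℝ) * ((2 * ζ + 3) * pen j (nsz j) + (2 * κ + 1) * c₂ * eps j) := by
  intro j hj hij
  simpa only [excessBound, hcard, ← mul_assoc] using
    stmt9_general (pen := fun k ↦ pen k (nsz k)) (δ := fun k ↦ c₂ * eps k) (ζ := ζ) (κ := κ)
      (fun k _ m _ ↦ hnested k m) (fun k _ ↦ hfstar_mem k) (fun k _ ↦ hfstar_min k)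
      (fun k _ ↦ hmem k) hERM (fun k _ ↦ (mul_pos hc₂ (heps k)).le)
      (fun k hk m hm ↦ hpen_nondec m hm k hk)
      (fun k hk m hm hkm ↦ mul_le_mul_of_nonneg_left (heps_nondec m hm k hk hkm) hc₂.le)
      (by linarith) (by linarith) (fun k hk ↦ hE1 k hk k hk) hihat_mem
      (by simpa only [BeatsSmallerClasses, ← mul_assoc] using hihat_max) hj hij
end

section
/- (Deterministic fast-rate transfer lemma.) Suppose the events E1 and E2 hold for all pairs of indices in S. If i, j ∈ S with i ≥ j and L̂ᵢ(f̂ⱼ) + ζ·penⱼ(nⱼ) ≤ L̂ᵢ(f̂ᵢ) + ζ·penᵢ(nᵢ) + κ·c₂·εᵢ, then R(f̂ⱼ) ≤ R(fᵢ*) + (2ζ + 3)·penᵢ(nᵢ) + (2κ + 1)·c₂·εᵢ. -/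
/-!
For `j ≤ i`, nestedness puts `f̂ⱼ` in `Fᵢ`, so E1 for the pair `(i, i)` bounds its excess risk over
`fᵢ*` by twice its excess empirical risk on the samples of class `i`. The selection condition
compares that empirical risk with the one of `f̂ᵢ`, which is within `penᵢ(nᵢ)` of that of `fᵢ*`.
The term `ζ penⱼ(nⱼ)` can be discarded: `penⱼ(nⱼ)` is the tolerance of an approximate minimizer,
hence nonnegative.
-/

section

variable {F : Type*}

/-- `a` is a minimizer of `L` over `G` up to the additive tolerance `p`; this is the guarantee of an
approximate empirical risk minimizer. Unlike in `IsMinOn`, `a` is required to lie in `G`. -/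
structure IsApproxMinOn (L : F → ℝ) (G : Set F) (p : ℝ) (a : F) : Prop where
  mem : a ∈ G
  le_add : ∀ f ∈ G, L a ≤ L f + p

namespace IsApproxMinOn

variable {L : F → ℝ} {G : Set F} {p : ℝ} {a : F}

theorem tolerance_nonneg (ha : IsApproxMinOn L G p a) : 0 ≤ p :=
  le_add_iff_nonneg_right (L a) |>.mp (ha.le_add a ha.mem)

theorem le_add_of_penalized_le (ha : IsApproxMinOn L G p a) {f g : F} (hg : g ∈ G)
    {ζ q δ : ℝ} (hζ : 0 ≤ ζ) (hq : 0 ≤ q) (h : L f + ζ * q ≤ L a + ζ * p + δ) :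
    L f ≤ L g + ((ζ + 1) * p + δ) :=
  calc
    L f ≤ L f + ζ * q := le_add_of_nonneg_right (mul_nonneg hζ hq)
    _ ≤ L a + ζ * p + δ := h
    _ ≤ L g + p + ζ * p + δ := by gcongr; exact ha.le_add g hg
    _ = L g + ((ζ + 1) * p + δ) := by ring

end IsApproxMinOn

theorem stmt10_general {ι : Type*} [Preorder ι] {𝓕 : ι → Set F} (h𝓕 : Monotone 𝓕)
    {R : F → ℝ} {L : ι → F → ℝ} {pen : ι → ℝ} {fhat : ι → F} {i j : ι} (hij : j ≤ i)
    (hi : IsApproxMinOn (L i) (𝓕 i) (pen i) (fhat i))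
    (hj : IsApproxMinOn (L j) (𝓕 j) (pen j) (fhat j))
    {g : F} (hg : g ∈ 𝓕 i) {ζ κ η : ℝ} (hζ : 0 ≤ ζ)
    (hE1 : ∀ f ∈ 𝓕 i, R f - R g - 2 * (L i f - L i g) ≤ pen i + η)
    (hcond : L i (fhat j) + ζ * pen j ≤ L i (fhat i) + ζ * pen i + κ * η) :
    R (fhat j) ≤ R g + (2 * ζ + 3) * pen i + (2 * κ + 1) * η := by
  have excess_risk : R (fhat j) - R g - 2 * (L i (fhat j) - L i g) ≤ pen i + η :=
    hE1 (fhat j) (h𝓕 hij hj.mem)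
  have empirical_risk : L i (fhat j) ≤ L i g + ((ζ + 1) * pen i + κ * η) :=
    hi.le_add_of_penalized_le hg hζ hj.tolerance_nonneg hcond
  linarith

end

/-- Deterministic fast-rate transfer lemma (Lemma C.3 /
`lemma:nesting-fast-upper-good` of Agarwal–Bartlett–Duchi): under the events
E1 and E2 for all pairs in `S`, if `i ≥ j` and
`L̂ᵢ(f̂ⱼ) + ζ penⱼ(nⱼ) ≤ L̂ᵢ(f̂ᵢ) + ζ penᵢ(nᵢ) + κ c₂ εᵢ`, then
`R(f̂ⱼ) ≤ R(fᵢ*) + (2ζ+3) penᵢ(nᵢ) + (2κ+1) c₂ εᵢ`. -/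
theorem stmt10 {F : Type*} (𝓕 : ℕ → Set F)
    (hnested : ∀ i j : ℕ, i ≤ j → 𝓕 i ⊆ 𝓕 j)
    (R : F → ℝ) (S : Finset ℕ)
    (fstar : ℕ → F) (hfstar_mem : ∀ i, fstar i ∈ 𝓕 i)
    (hfstar_min : ∀ i, ∀ f ∈ 𝓕 i, R (fstar i) ≤ R f)
    (nsz : ℕ → ℕ) (pen : ℕ → ℕ → ℝ)
    (Lhat : ℕ → F → ℝ) (fhat : ℕ → F) (hmem : ∀ i, fhat i ∈ 𝓕 i)
    (hERM : ∀ i ∈ S, ∀ f ∈ 𝓕 i, Lhat i (fhat i) ≤ Lhat i f + pen i (nsz i))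
    (eps : ℕ → ℝ) (heps : ∀ i, 0 < eps i)
    (ζ κ c₂ : ℝ) (hζ : 0 < ζ) (hκ : 0 < κ) (hc₂ : 0 < c₂)
    (hE1 : ∀ i ∈ S, ∀ j ∈ S, ∀ f ∈ 𝓕 j,
      R f - R (fstar j) - 2 * (Lhat i f - Lhat i (fstar j)) ≤ pen j (nsz i) + c₂ * eps i)
    (hE2 : ∀ i ∈ S, ∀ j ∈ S, ∀ f ∈ 𝓕 j,
      Lhat i f - Lhat i (fstar j) - 2 * (R f - R (fstar j)) ≤ pen j (nsz i) + c₂ * eps i)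
    (i j : ℕ) (hi : i ∈ S) (hj : j ∈ S) (hij : j ≤ i)
    (hcond : Lhat i (fhat j) + ζ * pen j (nsz j)
      ≤ Lhat i (fhat i) + ζ * pen i (nsz i) + κ * c₂ * eps i) :
    R (fhat j) ≤ R (fstar i) + (2 * ζ + 3) * pen i (nsz i) + (2 * κ + 1) * c₂ * eps i := by
  simpa only [mul_assoc] using stmt10_general (pen := fun k ↦ pen k (nsz k)) (κ := κ) hnested hij
    ⟨hmem i, hERM i hi⟩ ⟨hmem j, hERM j hj⟩ (hfstar_mem i) hζ.le (hE1 i hi i hi)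
    (by simpa only [mul_assoc] using hcond)
end
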